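/- Let $a, b_1, b_2, b_3, b_4$ be integers with $3a + b_1 + b_2 + b_3 + b_4 = 5k+1$ for some integer $k$. Then $a^2 - b_1^2 - b_2^2 - b_3^2 - b_4^2 \le 5k^2 + 2k - 1$. Moreover, equality holds if and only if either ($a = 3k$ and exactly one $b_i$ equals $1-k$ while the other three equal $-k$), or ($a = 3k+1$ and exactly two of the $b_i$ equal $-k$ while the other two equal $-k-1$). -/

import Mathlib

/-- The normalized (k = 0) problem. -/
lemma aux_norm (x p q r s : ℤ) (h : 3 * x + p + q + r + s = 1) :
    x ^ 2 - p ^ 2 - q ^ 2 - r ^ 2 - s ^ 2 ≤ -1 ∧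
    (x ^ 2 - p ^ 2 - q ^ 2 - r ^ 2 - s ^ 2 = -1 →
      (x = 0 ∧ ({p, q, r, s} : Multiset ℤ) = {1, 0, 0, 0}) ∨
      (x = 1 ∧ ({p, q, r, s} : Multiset ℤ) = {0, 0, -1, -1})) := by
  have hnn : ∀ t : ℤ, 0 ≤ t ^ 2 - t := fun t => by
    rcases le_or_gt t 0 with ht | ht <;> nlinarith
  have hnp : ∀ t : ℤ, 0 ≤ t ^ 2 + t := fun t => by
    have := hnn (-t); nlinarith
  by_cases h0 : x = 0
  · subst h0
    have hp := hnn p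
    have hq := hnn q
    have hr := hnn r
    have hs := hnn s
    refine ⟨by linarith, fun he => Or.inl ⟨rfl, ?_⟩⟩
    have key : ∀ t : ℤ, t ^ 2 - t = 0 → t = 0 ∨ t = 1 := fun t ht => by
      have : t * (t - 1) = 0 := by linarith
      rcases mul_eq_zero.mp this with h | h
      · left; exact h
      · right; linarith
    rcases key p (by linarith) with rfl | rfl <;> rcases key q (by linarith) with rfl | rfl <;>
      rcases key r (by linarith) with rfl | rfl <;> rcases key s (by linarith) with rfl | rfl <;>
      first | (exfalso; omega) | decide
  by_cases h1 : x = 1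
  · subst h1
    have hp := hnp p
    have hq := hnp q
    have hr := hnp r
    have hs := hnp s
    refine ⟨by linarith, fun he => Or.inr ⟨rfl, ?_⟩⟩
    have key : ∀ t : ℤ, t ^ 2 + t = 0 → t = 0 ∨ t = -1 := fun t ht => by
      have : t * (t + 1) = 0 := by linarith
      rcases mul_eq_zero.mp this with h | h
      · left; exact h
      · right; linarith
    rcases key p (by linarith) with rfl | rfl <;> rcases key q (by linarith) with rfl | rfl <;>
      rcases key r (by linarith) with rfl | rfl <;> rcases key s (by linarith) with rfl | rfl <;>
      first | (exfalso; omega) | decide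
  have hcs : (p + q + r + s) ^ 2 ≤ 4 * (p ^ 2 + q ^ 2 + r ^ 2 + s ^ 2) := by
    nlinarith [sq_nonneg (p - q), sq_nonneg (p - r), sq_nonneg (p - s), sq_nonneg (q - r),
      sq_nonneg (q - s), sq_nonneg (r - s)]
  have hsum : p + q + r + s = 1 - 3 * x := by linarith
  rw [hsum] at hcs
  have hx : x ≤ -1 ∨ 2 ≤ x := by omega
  have hlt : x ^ 2 - p ^ 2 - q ^ 2 - r ^ 2 - s ^ 2 < -1 := by
    rcases hx with hx | hx <;> nlinarith
  exact ⟨hlt.le, fun he => absurd he hlt.ne⟩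

theorem stmt_1 (a b1 b2 b3 b4 k : ℤ)
    (h : 3 * a + b1 + b2 + b3 + b4 = 5 * k + 1) :
    a ^ 2 - b1 ^ 2 - b2 ^ 2 - b3 ^ 2 - b4 ^ 2 ≤ 5 * k ^ 2 + 2 * k - 1 ∧
    (a ^ 2 - b1 ^ 2 - b2 ^ 2 - b3 ^ 2 - b4 ^ 2 = 5 * k ^ 2 + 2 * k - 1 ↔
      (a = 3 * k ∧ ({b1, b2, b3, b4} : Multiset ℤ) = {1 - k, -k, -k, -k}) ∨
      (a = 3 * k + 1 ∧ ({b1, b2, b3, b4} : Multiset ℤ) = {-k, -k, -k - 1, -k - 1})) := by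
  have hn := aux_norm (a - 3 * k) (b1 + k) (b2 + k) (b3 + k) (b4 + k) (by linarith)
  have hQ : (a - 3 * k) ^ 2 - (b1 + k) ^ 2 - (b2 + k) ^ 2 - (b3 + k) ^ 2 - (b4 + k) ^ 2
      = a ^ 2 - b1 ^ 2 - b2 ^ 2 - b3 ^ 2 - b4 ^ 2 - (5 * k ^ 2 + 2 * k) := by
    linear_combination (-2 * k) * h
  rw [hQ] at hn
  obtain ⟨hle, heq⟩ := hn
  refine ⟨by linarith, fun he => ?_, ?_⟩
  · rcases heq (by linarith) with ⟨hx, hm⟩ | ⟨hx, hm⟩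
    · refine Or.inl ⟨by linarith, ?_⟩
      have := congrArg (Multiset.map (fun t : ℤ => t - k)) hm
      simpa using this
    · refine Or.inr ⟨by linarith, ?_⟩
      have := congrArg (Multiset.map (fun t : ℤ => t - k)) hm
      have e : -k - 1 = -1 - k := by ring
      rw [e]
      simpa using this
  · rintro (⟨rfl, hm⟩ | ⟨rfl, hm⟩)
    · have := congrArg (fun m => (Multiset.map (fun t : ℤ => t ^ 2) m).sum) hm
      simp at this
      linarith
    · have := congrArg (fun m => (Multiset.map (fun t : ℤ => t ^ 2) m).sum) hm
      simp at this
      linarith
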